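/- Let 1 ≤ k ≤ n−1 and let (n_1,…,n_{N−1}) satisfy: (i) 0 ≤ n_i < k for all i, and (ii) n_{l+1} ≥ n_{l+2} ≥ ⋯ ≥ n_{N−1} for some l ≥ 0. Then for any permutation π of {1,…,l}, the right action of B_k(u) satisfies ⟨n_{π(1)}, n_{π(2)}, …, n_{π(l)}, k, n_{l+1}, …, n_{N−1}| B_k(u) = (∏_{i=1}^{l} (u ⊖ t_i)) ⟨n_{π(1)}, …, n_{π(l)}, n_{l+1}, …, n_{N−1}, 0|. -/

import Mathlib

noncomputable section
open scoped BigOperators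

variable {F : Type*}

/-- `x ⊖ y := (x - y)/(1 + β·y)`. -/
def om [Field F] (β x y : F) : F := (x - y) / (1 + β * y)

/-- `⊖ t := -t/(1 + β·t)`. -/
def negOm [Field F] (β t : F) : F := (-t) / (1 + β * t)

/-- The R-matrix `R^{(n)}(x,y)` on `V ⊗ V`, `V = F^n`, with entries
`R_{ij,kl} = (1 + [k<l]·β(x⊖y)) δ_{il} δ_{jk} + [k>l]·(x⊖y) δ_{ik} δ_{jl}`;
the row index is the pair `(i,j)`, the column index is the pair `(k,l)`. -/
def Rmat [Field F] (n : ℕ) (β x y : F) :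
    Matrix (Fin n × Fin n) (Fin n × Fin n) F := Matrix.of fun p q =>
  (if p.1 = q.2 ∧ p.2 = q.1 then (if q.1 < q.2 then 1 + β * om β x y else 1) else 0) +
  (if p.1 = q.1 ∧ p.2 = q.2 ∧ q.2 < q.1 then om β x y else 0)

/-- `R_{a i}(u, τ)` : the R-matrix acting on the auxiliary space (first factor)
and the `i`-th site of `H = (F^n)^{⊗N}`, identity elsewhere. -/
def Rsite [Field F] (n N : ℕ) (β u τ : F) (i : Fin N) :
    Matrix (Fin n × (Fin N → Fin n)) (Fin n × (Fin N → Fin n)) F := Matrix.of fun p q =>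
  Rmat n β u τ (p.1, p.2 i) (q.1, q.2 i) *
    (if ∀ j, j ≠ i → p.2 j = q.2 j then 1 else 0)

/-- The monodromy matrix `T_a(u) = R_{aN}(u,t_N) ⋯ R_{a1}(u,t_1)` on `V_a ⊗ H`. -/
def Tmono [Field F] (n N : ℕ) (β u : F) (t : Fin N → F) :
    Matrix (Fin n × (Fin N → Fin n)) (Fin n × (Fin N → Fin n)) F :=
  ((List.ofFn fun i : Fin N => Rsite n N β u (t i) i).reverse).prod

/-- The block `T_a(u)_{r c}` (with respect to the auxiliary space) as an operator on `H`. -/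
def blockOp [Field F] (n N : ℕ) (β u : F) (t : Fin N → F) (r c : Fin n) :
    Matrix (Fin N → Fin n) (Fin N → Fin n) F :=
  Matrix.of fun s s' => Tmono n N β u t (r, s) (c, s')

/-- The natural basis vector `|n_1,…,n_N⟩` of `H` (also used as a dual basis covector). -/
def ket [Field F] (n N : ℕ) (g : Fin N → Fin n) : (Fin N → Fin n) → F :=
  fun s => if s = g then 1 else 0

/-- The bra `⟨n_{π(1)},…,n_{π(l)}, k, n_{l+1},…,n_{N-1}|` (as a function recording
the entries at the `N = L+1` sites, `0`-based positions). -/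
def braIn (L l m : ℕ) (hl : l ≤ L) (nseq : Fin L → Fin (m + 2))
    (π : Equiv.Perm (Fin L)) (kk : Fin (m + 2)) : Fin (L + 1) → Fin (m + 2) :=
  fun j =>
    if h : (j : ℕ) < l then nseq (π ⟨j, lt_of_lt_of_le h hl⟩)
    else if h2 : (j : ℕ) = l then kk
    else nseq ⟨(j : ℕ) - 1, by have := j.isLt; omega⟩

/-- The bra `⟨n_{π(1)},…,n_{π(l)}, n_{l+1},…,n_{N-1}, 0|`. -/
def braOut (L l m : ℕ) (hl : l ≤ L) (nseq : Fin L → Fin (m + 2))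
    (π : Equiv.Perm (Fin L)) : Fin (L + 1) → Fin (m + 2) :=
  fun j =>
    if h : (j : ℕ) < l then nseq (π ⟨j, lt_of_lt_of_le h hl⟩)
    else if h2 : (j : ℕ) < L then nseq ⟨j, h2⟩
    else 0

/-!
The first site acts last on a bra, so `T` for `N + 1` sites is `T` for the last `N` sites followed
by a single `R`. Append the initial auxiliary value to the bra, giving a word `e_0, …, e_N`. If
`a ≤ j`, then `R` sends `⟨a, j|` to `⟨j, a|`; hence along a weakly decreasing end of the word the
auxiliary line swaps its way to the left, and ends up carrying the first letter `k` of that end.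
Left of it all letters are smaller than `k`, and the only entry of `R` that ends in the auxiliary
value `k` is then the diagonal one, `u ⊖ t_i`. So `k` is deleted from the word, and each site on
its left contributes a factor `u ⊖ t_i`.
-/

section ExtendHead

variable {ι κ R : Type*} {N : ℕ}

/-- Splits off the state of site `0` from a joint state of the auxiliary space and `N + 1` sites. -/
def splitHead (ι κ : Type*) (N : ℕ) : ι × (Fin (N + 1) → κ) ≃ (ι × (Fin N → κ)) × κ where
  toFun p := ((p.1, Fin.tail p.2), p.2 0)
  invFun q := (q.1.1, Fin.cons q.2 q.1.2)
  left_inv p := by simp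
  right_inv q := by simp

/-- The operator on the auxiliary space and `N + 1` sites that acts as a given operator on the
auxiliary space and the sites `1, …, N`, and as the identity on site `0`. -/
def extendHead [Fintype ι] [DecidableEq ι] [Fintype κ] [DecidableEq κ] [Semiring R] :
    Matrix (ι × (Fin N → κ)) (ι × (Fin N → κ)) R →*
      Matrix (ι × (Fin (N + 1) → κ)) (ι × (Fin (N + 1) → κ)) R where
  toFun M := (Matrix.blockDiagonal fun _ : κ => M).submatrix (splitHead ι κ N) (splitHead ι κ N)
  map_one' := by
    rw [← Pi.one_def, Matrix.blockDiagonal_one, Matrix.submatrix_one_equiv]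
  map_mul' M M' := by
    rw [Matrix.blockDiagonal_mul, Matrix.submatrix_mul_equiv]

theorem extendHead_apply [Fintype ι] [DecidableEq ι] [Fintype κ] [DecidableEq κ] [Semiring R]
    (M : Matrix (ι × (Fin N → κ)) (ι × (Fin N → κ)) R) (p q : ι × (Fin (N + 1) → κ)) :
    extendHead M p q =
      if p.2 0 = q.2 0 then M (p.1, Fin.tail p.2) (q.1, Fin.tail q.2) else 0 :=
  rfl

end ExtendHead

theorem eq_removeNth_succ_iff {κ : Type*} {N : ℕ} (e : Fin (N + 2) → κ) (p : Fin (N + 1))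
    (s : Fin (N + 1) → κ) :
    s = p.succ.removeNth e ↔ s 0 = e 0 ∧ Fin.tail s = p.removeNth (Fin.tail e) := by
  simp [funext_iff, Fin.forall_fin_succ, Fin.removeNth_apply, Fin.tail]

theorem prod_castSucc_lt_succ {R : Type*} [CommMonoid R] {N : ℕ} (c : Fin (N + 1) → R)
    (p : Fin (N + 1)) :
    ∏ i with i.castSucc < p.succ, c i =
      c 0 * ∏ i : Fin N with i.castSucc < p, c i.succ := by
  simp [Finset.prod_filter, Fin.prod_univ_succ, -Fin.castSucc_lt_succ_iff]

section Monodromy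

variable [Field F] {n N : ℕ} (β u : F)

theorem Rmat_row_of_le (y : F) {a j : Fin n} (h : a ≤ j) :
    Rmat n β u y (a, j) = Pi.single (j, a) 1 := by
  ext ⟨b, i⟩
  simp only [Rmat, Matrix.of_apply, Pi.single_apply, Prod.mk.injEq]
  grind

theorem Rmat_apply_of_lt (y : F) {j k : Fin n} (h : j < k) (a i : Fin n) :
    Rmat n β u y (a, j) (k, i) = if a = k ∧ i = j then om β u y else 0 := by
  simp only [Rmat, Matrix.of_apply]
  grind

theorem Rsite_zero_apply (y : F) (p q : Fin n × (Fin (N + 1) → Fin n)) :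
    Rsite n (N + 1) β u y 0 p q =
      if Fin.tail p.2 = Fin.tail q.2 then Rmat n β u y (p.1, p.2 0) (q.1, q.2 0) else 0 := by
  simp [Rsite, Fin.forall_fin_succ, funext_iff, Fin.tail]

theorem Rsite_succ (y : F) (i : Fin N) :
    Rsite n (N + 1) β u y i.succ = extendHead (Rsite n N β u y i) := by
  ext p q
  simp [Rsite, extendHead_apply, Fin.forall_fin_succ, Fin.tail, ite_and, (Fin.succ_ne_zero i).symm]
  congr

theorem Tmono_succ (t : Fin (N + 1) → F) :
    Tmono n (N + 1) β u t =
      extendHead (Tmono n N β u (Fin.tail t)) * Rsite n (N + 1) β u (t 0) 0 := by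
  simp only [Tmono, List.ofFn_succ, List.reverse_cons, List.prod_append, List.prod_singleton,
    Rsite_succ, map_list_prod, List.map_reverse, List.map_ofFn]
  rfl

theorem Tmono_succ_apply (t : Fin (N + 1) → F) (a b : Fin n) (s s' : Fin (N + 1) → Fin n) :
    Tmono n (N + 1) β u t (a, s) (b, s') =
      ∑ c, Tmono n N β u (Fin.tail t) (a, Fin.tail s) (c, Fin.tail s') *
        Rmat n β u (t 0) (c, s 0) (b, s' 0) := by
  rw [Tmono_succ, Matrix.mul_apply, ← (splitHead (Fin n) (Fin n) N).symm.sum_comp]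
  simp [splitHead, extendHead_apply, Rsite_zero_apply, Fintype.sum_prod_type]

theorem Tmono_row_of_antitone (t : Fin N → F) {e : Fin (N + 1) → Fin n} (he : Antitone e) :
    Tmono n N β u t (e (Fin.last N), Fin.init e) = Pi.single (e 0, Fin.tail e) 1 := by
  induction N with
  | zero =>
    ext ⟨b, s'⟩
    simp [Tmono, Matrix.one_apply, Pi.single_apply, eq_comm, Subsingleton.elim s' (Fin.tail e),
      Subsingleton.elim (Fin.init e) (Fin.tail e)]
  | succ N ih =>
    have tail_row : Tmono n N β u (Fin.tail t) (e (Fin.last (N + 1)), Fin.tail (Fin.init e)) =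
        Pi.single (e 1, Fin.tail (Fin.tail e)) 1 := by
      rw [Fin.tail_init_eq_init_tail]
      exact ih (Fin.tail t) (he.comp_monotone Fin.strictMono_succ.monotone)
    ext ⟨b, s'⟩
    rw [Tmono_succ_apply, tail_row]
    calc ∑ c, (Pi.single (e 1, Fin.tail (Fin.tail e)) 1 : _ → F) (c, Fin.tail s') *
          Rmat n β u (t 0) (c, Fin.init e 0) (b, s' 0)
        = if Fin.tail s' = Fin.tail (Fin.tail e) then Rmat n β u (t 0) (e 1, e 0) (b, s' 0)
          else 0 := by
          simp [Pi.single_apply, ite_and, Fin.init]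
      _ = (Pi.single (e 0, Fin.tail e) 1 : _ → F) (b, s') := by
          rw [Rmat_row_of_le β u (t 0) (he (Fin.zero_le 1))]
          simp only [Pi.single_apply, Prod.mk.injEq, funext_iff, Fin.forall_fin_succ, Fin.tail,
            Fin.succ_zero_eq_one, ← ite_and]
          exact if_congr (by tauto) rfl rfl

theorem Tmono_succ_apply_of_lt (t : Fin (N + 1) → F) (a : Fin n) {k : Fin n}
    {s : Fin (N + 1) → Fin n} (h : s 0 < k) (s' : Fin (N + 1) → Fin n) :
    Tmono n (N + 1) β u t (a, s) (k, s') =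
      if s' 0 = s 0 then
        om β u (t 0) * Tmono n N β u (Fin.tail t) (a, Fin.tail s) (k, Fin.tail s')
      else 0 := by
  simp [Tmono_succ_apply, Rmat_apply_of_lt β u (t 0) h, ite_and, mul_comm]

theorem Tmono_apply_of_antitone (t : Fin N → F) {e : Fin (N + 1) → Fin n} (he : Antitone e)
    (s' : Fin N → Fin n) :
    Tmono n N β u t (e (Fin.last N), Fin.init e) (e 0, s') =
      if s' = Fin.tail e then 1 else 0 := by
  simp [Tmono_row_of_antitone β u t he, Pi.single_apply]

theorem Tmono_apply_of_antitoneOn_Ici (t : Fin N → F) {e : Fin (N + 1) → Fin n} {p : Fin (N + 1)}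
    (hlt : ∀ i < p, e i < e p) (he : AntitoneOn e (Set.Ici p)) (s' : Fin N → Fin n) :
    Tmono n N β u t (e (Fin.last N), Fin.init e) (e p, s') =
      if s' = p.removeNth e then ∏ i with i.castSucc < p, om β u (t i) else 0 := by
  induction N with
  | zero =>
    obtain rfl := Fin.fin_one_eq_zero p
    simpa using Tmono_apply_of_antitone β u t (Subsingleton.antitone (α := Fin 1) e) s'
  | succ N ih =>
    cases p using Fin.cases with
    | zero =>
      have he_all : Antitone e := fun i j hij => he i.zero_le j.zero_le hij
      simpa using Tmono_apply_of_antitone β u t he_all s'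
    | succ p =>
      have hlt_tail : ∀ i < p, Fin.tail e i < Fin.tail e p := fun i hi =>
        hlt i.succ (Fin.succ_lt_succ_iff.mpr hi)
      have he_tail : AntitoneOn (Fin.tail e) (Set.Ici p) := fun i hi j hj hij =>
        he (Fin.succ_le_succ_iff.mpr hi) (Fin.succ_le_succ_iff.mpr hj)
          (Fin.succ_le_succ_iff.mpr hij)
      have tail_apply : Tmono n N β u (Fin.tail t)
          (e (Fin.last (N + 1)), Fin.tail (Fin.init e)) (e p.succ, Fin.tail s') =
            if Fin.tail s' = p.removeNth (Fin.tail e) then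
              ∏ i : Fin N with i.castSucc < p, om β u (t i.succ) else 0 := by
        rw [Fin.tail_init_eq_init_tail]
        exact ih (Fin.tail t) hlt_tail he_tail (Fin.tail s')
      have hlt_zero : Fin.init e 0 < e p.succ := hlt 0 p.succ_pos
      rw [Tmono_succ_apply_of_lt β u t _ hlt_zero, tail_apply, prod_castSucc_lt_succ,
        mul_ite, mul_zero, ← ite_and]
      exact if_congr (eq_removeNth_succ_iff e p s').symm rfl rfl

theorem ket_eq_single (s : Fin N → Fin n) : ket (F := F) n N s = Pi.single s 1 := by
  ext s'
  simp [ket, Pi.single_apply]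

theorem vecMul_ket_blockOp (t : Fin N → F) {e : Fin (N + 1) → Fin n} {p : Fin (N + 1)}
    (hlt : ∀ i < p, e i < e p) (he : AntitoneOn e (Set.Ici p)) :
    Matrix.vecMul (ket n N (Fin.init e)) (blockOp n N β u t (e (Fin.last N)) (e p)) =
      (∏ i with i.castSucc < p, om β u (t i)) • ket n N (p.removeNth e) := by
  ext s'
  rw [ket_eq_single, Matrix.single_one_vecMul]
  simp [blockOp, Matrix.row, ket, Tmono_apply_of_antitoneOn_Ici β u t hlt he]

end Monodromy

section Bra

variable {L l m : ℕ} (hl : l ≤ L) (nseq : Fin L → Fin (m + 2)) (π : Equiv.Perm (Fin L))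
  (k : Fin (m + 2))

/-- The word `n_{π(1)}, …, n_{π(l)}, k, n_{l+1}, …, n_{N-1}, 0`: the labels of the ingoing bra
followed by the ingoing label `0` of the auxiliary space. -/
def braExt : Fin (L + 2) → Fin (m + 2) := Fin.snoc (braIn L l m hl nseq π k) 0

theorem braExt_castSucc_of_lt {i : Fin (L + 1)} (hi : (i : ℕ) < l) :
    braExt hl nseq π k i.castSucc = braOut L l m hl nseq π i := by
  simp [braExt, braIn, braOut, hi]

theorem braExt_self : braExt hl nseq π k ⟨l, by omega⟩ = k := by
  simp [braExt, braIn, Fin.snoc, show l < L + 1 by omega]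

theorem braExt_succ_of_le {i : Fin (L + 1)} (hi : l ≤ i) :
    braExt hl nseq π k i.succ = braOut L l m hl nseq π i := by
  cases i using Fin.lastCases with
  | last => simp [braExt, braOut, hl.not_gt, Fin.succ_last]
  | cast i =>
    rw [Fin.val_castSucc] at hi
    have hlt : ¬(i + 1 : ℕ) < l := by omega
    have hne : (i + 1 : ℕ) ≠ l := by omega
    simp [braExt, braIn, braOut, ← Fin.castSucc_succ, hlt, hne, hi.not_gt]

theorem removeNth_braExt :
    Fin.removeNth ⟨l, by omega⟩ (braExt hl nseq π k) = braOut L l m hl nseq π := by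
  ext1 i
  rcases lt_or_ge (i : ℕ) l with hi | hi
  · rw [Fin.removeNth_apply, Fin.succAbove_of_castSucc_lt _ _ hi, braExt_castSucc_of_lt _ _ _ _ hi]
  · rw [Fin.removeNth_apply, Fin.succAbove_of_le_castSucc _ _ hi, braExt_succ_of_le _ _ _ _ hi]

variable {nseq k}

theorem braOut_lt_of_lt (hk : ∀ i, nseq i < k) {i : Fin (L + 1)} (hi : (i : ℕ) < l) :
    braOut L l m hl nseq π i < k := by
  simp [braOut, hi, hk]

theorem braOut_le (hk : ∀ i, nseq i < k) (i : Fin (L + 1)) : braOut L l m hl nseq π i ≤ k := by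
  unfold braOut
  split_ifs
  exacts [(hk _).le, (hk _).le, k.zero_le]

theorem braOut_le_braOut (hmono : ∀ i j : Fin L, l ≤ (i : ℕ) → (i : ℕ) ≤ (j : ℕ) → nseq j ≤ nseq i)
    {i j : Fin (L + 1)} (hi : l ≤ (i : ℕ)) (hij : i ≤ j) :
    braOut L l m hl nseq π j ≤ braOut L l m hl nseq π i := by
  have hij' : (i : ℕ) ≤ j := hij
  by_cases hj : (j : ℕ) < L
  · simpa [braOut, hi.not_gt, (hi.trans hij').not_gt, hj, hij'.trans_lt hj] using
      hmono ⟨i, _⟩ ⟨j, hj⟩ hi hij'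
  · simp [braOut, (hi.trans hij').not_gt, hj]

theorem braExt_lt_of_lt (hk : ∀ i, nseq i < k) :
    ∀ i < (⟨l, by omega⟩ : Fin (L + 2)), braExt hl nseq π k i < k := by
  intro i hi
  cases i using Fin.lastCases with
  | last => exact absurd (Fin.lt_def.mp hi) (by grind)
  | cast i =>
    rw [braExt_castSucc_of_lt hl nseq π k hi]
    exact braOut_lt_of_lt hl π hk hi

theorem antitoneOn_braExt (hk : ∀ i, nseq i < k)
    (hmono : ∀ i j : Fin L, l ≤ (i : ℕ) → (i : ℕ) ≤ (j : ℕ) → nseq j ≤ nseq i) :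
    AntitoneOn (braExt hl nseq π k) (Set.Ici ⟨l, by omega⟩) := by
  intro i hi j _ hij
  rcases hij.eq_or_lt with rfl | hij
  · exact le_rfl
  obtain ⟨j, rfl⟩ := Fin.exists_succ_eq.mpr (Fin.ne_zero_of_lt hij)
  have hlj : l ≤ (j : ℕ) := Nat.lt_succ_iff.mp (lt_of_le_of_lt hi hij)
  rw [braExt_succ_of_le hl nseq π k hlj]
  rcases (Set.mem_Ici.mp hi).eq_or_lt with rfl | hi
  · rw [braExt_self]
    exact braOut_le hl π hk j
  · obtain ⟨i, rfl⟩ := Fin.exists_succ_eq.mpr (Fin.ne_zero_of_lt hi)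
    have hli : l ≤ (i : ℕ) := Nat.lt_succ_iff.mp hi
    rw [braExt_succ_of_le hl nseq π k hli]
    exact braOut_le_braOut hl π hmono hli (Fin.succ_lt_succ_iff.mp hij).le

end Bra

theorem one_add_mul_ne_zero_of_algebraicIndependent {ι R A : Type*} [CommRing R] [Nontrivial R]
    [CommRing A] [Algebra R A] {x : ι → A} (hx : AlgebraicIndependent R x) (i j : ι) :
    1 + x i * x j ≠ 0 := by
  intro h
  have hp : (1 + MvPolynomial.X i * MvPolynomial.X j : MvPolynomial ι R) = 0 :=
    hx.eq_zero_of_aeval_eq_zero _ (by simpa using h)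
  simpa using congrArg MvPolynomial.constantCoeff hp

theorem B_right_action_general [Field F] (L l m : ℕ) (hl : l ≤ L) (β u : F)
    (t : Fin (L + 1) → F) (_ht : ∀ i, 1 + β * t i ≠ 0)
    (k : Fin (m + 2)) (nseq : Fin L → Fin (m + 2)) (hk : ∀ i, nseq i < k)
    (hmono : ∀ i j : Fin L, l ≤ (i : ℕ) → (i : ℕ) ≤ (j : ℕ) → nseq j ≤ nseq i)
    (π : Equiv.Perm (Fin L)) :
    Matrix.vecMul (ket (m + 2) (L + 1) (braIn L l m hl nseq π k))
        (blockOp (m + 2) (L + 1) β u t 0 k) =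
      (∏ i ∈ Finset.univ.filter (fun i : Fin (L + 1) => (i : ℕ) < l), om β u (t i)) •
        ket (m + 2) (L + 1) (braOut L l m hl nseq π) := by
  have hlt : ∀ i < (⟨l, by omega⟩ : Fin (L + 2)),
      braExt hl nseq π k i < braExt hl nseq π k ⟨l, by omega⟩ := by
    rw [braExt_self]
    exact braExt_lt_of_lt hl π hk
  have action := vecMul_ket_blockOp β u t hlt (antitoneOn_braExt hl π hk hmono)
  rw [removeNth_braExt, braExt_self] at action
  simpa [braExt, Fin.lt_def] using action

/-- **Right action of `B_k(u)`** (Lemma `lemma1`), for `n = m+2`, `N = L+1`: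
if `0 ≤ n_i < k` for all `i`, and `n_{l+1} ≥ n_{l+2} ≥ ⋯ ≥ n_{N-1}`, then for any
permutation `π` of `{1,…,l}`,
`⟨n_{π(1)},…,n_{π(l)}, k, n_{l+1},…,n_{N-1}| B_k(u)
  = (∏_{i=1}^{l} (u ⊖ t_i)) ⟨n_{π(1)},…,n_{π(l)}, n_{l+1},…,n_{N-1}, 0|`. -/
theorem B_right_action [Field F] [CharZero F] (L l m : ℕ) (hl : l ≤ L) (β u : F)
    (t : Fin (L + 1) → F)
    (hind : AlgebraicIndependent ℚ (Sum.elim ![β, u] t))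
    (kk : Fin (m + 1)) (nseq : Fin L → Fin (m + 2))
    (hk : ∀ i, (nseq i : ℕ) < (kk.succ : ℕ))
    (hmono : ∀ i j : Fin L, l ≤ (i : ℕ) → (i : ℕ) ≤ (j : ℕ) → nseq j ≤ nseq i)
    (π : Equiv.Perm (Fin L)) (hπ : ∀ j : Fin L, l ≤ (j : ℕ) → π j = j) :
    Matrix.vecMul (ket (m + 2) (L + 1) (braIn L l m hl nseq π kk.succ))
        (blockOp (m + 2) (L + 1) β u t 0 kk.succ) =
      (∏ i ∈ Finset.univ.filter (fun i : Fin (L + 1) => (i : ℕ) < l), om β u (t i)) •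
        ket (m + 2) (L + 1) (braOut L l m hl nseq π) := by
  exact B_right_action_general L l m hl β u t
    (fun i => one_add_mul_ne_zero_of_algebraicIndependent hind (.inl 0) (.inr i)) _ nseq hk hmono π
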